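/- (Correctness of halting rule H3.) Let G=(V,A) be a finite loopless digraph and suppose V is partitioned into two disjoint sets V₁ and V₂ with u ∈ V₁, v ∈ V₂, r ∈ V₁, |V₁| ≥ 2, |V₂| ≥ 2, such that the only arc of A with tail in V₁ and head in V₂ is (u,v). Then there is no spanning out-tree of G rooted at r in which v is a leaf. -/

import Mathlib

variable {V : Type*} [DecidableEq V] [Fintype V]

/-- The vertex set of an arc set `T` together with the root `r`. -/
def dverts (r : V) (T : Finset (V × V)) : Finset V :=
  insert r (T.image Prod.fst ∪ T.image Prod.snd)

/-- In-degree of `v` in the arc set `T`. -/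
def dInDeg (T : Finset (V × V)) (v : V) : ℕ :=
  (T.filter fun a => a.2 = v).card

/-- Out-degree of `v` in the arc set `T`. -/
def dOutDeg (T : Finset (V × V)) (v : V) : ℕ :=
  (T.filter fun a => a.1 = v).card

/-- Reachability by a directed path using only arcs of `T`. -/
def DReach (T : Finset (V × V)) (x y : V) : Prop :=
  Relation.ReflTransGen (fun a b => (a, b) ∈ T) x y

/-- A loopless arc set. -/
def DLoopless (A : Finset (V × V)) : Prop := ∀ a ∈ A, a.1 ≠ a.2

/-- `T` is an out-tree of the digraph with arc set `A`, rooted at `r`. -/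
def IsOutTree (A : Finset (V × V)) (r : V) (T : Finset (V × V)) : Prop :=
  T ⊆ A ∧ dInDeg T r = 0 ∧ (∀ v ∈ dverts r T, v ≠ r → dInDeg T v = 1) ∧
    ∀ v ∈ dverts r T, DReach T r v

/-- `T` is a spanning out-tree of the digraph with arc set `A`, rooted at `r`. -/
def IsSpanningOutTree (A : Finset (V × V)) (r : V) (T : Finset (V × V)) : Prop :=
  IsOutTree A r T ∧ dverts r T = Finset.univ

/-- The leaves of an out-tree: vertices of out-degree 0. -/
def dleaves (r : V) (T : Finset (V × V)) : Finset V :=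
  (dverts r T).filter fun v => dOutDeg T v = 0

/-!
Every path from `r` into `V₂` must enter `V₂` at `v`. If `v` is a leaf of a spanning out-tree rooted
at `r`, then every such path in the tree stops there, so the tree misses all vertices of `V₂` other
than `v`.
-/

section Reachability

variable {α : Type*} {T : Finset (α × α)} {S : Set α} {x y v : α}

theorem DReach.mem_of_closed (h : DReach T x y) (hx : x ∈ S)
    (hS : ∀ a ∈ T, a.1 ∈ S → a.2 ∈ S) : y ∈ S := by
  induction h with
  | refl => exact hx
  | tail _ hbc hb => exact hS _ hbc hb

theorem DReach.mem_insert_of_exits_to_sink (h : DReach T x y) (hx : x ∈ S)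
    (hexit : ∀ a ∈ T, a.1 ∈ S → a.2 ∉ S → a.2 = v) (hv : ∀ w, (v, w) ∉ T) :
    y ∈ insert v S := by
  refine h.mem_of_closed (Set.mem_insert_of_mem v hx) ?_
  rintro ⟨b, c⟩ hbc (rfl | hb)
  · exact absurd hbc (hv c)
  · exact or_iff_not_imp_right.mpr (hexit _ hbc hb)

end Reachability

section OutTrees

variable {α : Type*} [DecidableEq α] {A T : Finset (α × α)} {r v : α}

theorem dOutDeg_eq_zero_iff : dOutDeg T v = 0 ↔ ∀ w, (v, w) ∉ T := by
  simp only [dOutDeg, Finset.card_eq_zero, Finset.filter_eq_empty_iff, Prod.forall]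
  exact ⟨fun h w hw => h v w hw rfl, fun h b w hw hb => h w (hb ▸ hw)⟩

theorem notMem_of_mem_dleaves (hv : v ∈ dleaves r T) (w : α) : (v, w) ∉ T :=
  dOutDeg_eq_zero_iff.mp (Finset.mem_filter.mp hv).2 w

variable [Fintype α]

theorem IsSpanningOutTree.subset (hT : IsSpanningOutTree A r T) : T ⊆ A :=
  hT.1.1

theorem IsSpanningOutTree.dReach (hT : IsSpanningOutTree A r T) (w : α) : DReach T r w :=
  hT.1.2.2.2 w (hT.2 ▸ Finset.mem_univ w)

theorem IsSpanningOutTree.insert_leaf_eq_univ {S : Set α} (hT : IsSpanningOutTree A r T)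
    (hv : v ∈ dleaves r T) (hr : r ∈ S)
    (hexit : ∀ a ∈ A, a.1 ∈ S → a.2 ∉ S → a.2 = v) : insert v S = Set.univ :=
  Set.eq_univ_of_forall fun w =>
    (hT.dReach w).mem_insert_of_exits_to_sink hr (fun a ha => hexit a (hT.subset ha))
      (notMem_of_mem_dleaves hv)

theorem stmt12_general {V₁ V₂ : Finset α} (hpart : V₁ ∪ V₂ = Finset.univ)
    (hdisj : Disjoint V₁ V₂) (hr : r ∈ V₁) (hV₂ : 2 ≤ V₂.card)
    (hhead : ∀ a ∈ A, a.1 ∈ V₁ → a.2 ∈ V₂ → a.2 = v) :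
    ¬ ∃ T : Finset (α × α), IsSpanningOutTree A r T ∧ v ∈ dleaves r T := by
  rintro ⟨T, hT, hv⟩
  have hcover (w : α) : w ∈ V₁ ∨ w ∈ V₂ := Finset.mem_union.mp (hpart ▸ Finset.mem_univ w)
  have huniv : insert v (V₁ : Set α) = Set.univ :=
    hT.insert_leaf_eq_univ hv hr fun a ha h₁ h₂ =>
      hhead a ha h₁ ((hcover a.2).resolve_left h₂)
  obtain ⟨w, hw₂, hwv⟩ := Finset.exists_mem_ne hV₂ v
  have hw : w ∈ insert v (V₁ : Set α) := huniv ▸ Set.mem_univ w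
  exact Finset.disjoint_left.mp hdisj (hw.resolve_left hwv) hw₂

end OutTrees

theorem stmt12 (A : Finset (V × V)) (V₁ V₂ : Finset V) (r u v : V)
    (hA : DLoopless A) (hpart : V₁ ∪ V₂ = Finset.univ)
    (hdisj : Disjoint V₁ V₂) (hu : u ∈ V₁) (hv : v ∈ V₂) (hr : r ∈ V₁)
    (hV₁ : 2 ≤ V₁.card) (hV₂ : 2 ≤ V₂.card) (huv : (u, v) ∈ A)
    (honly : ∀ p ∈ A, p.1 ∈ V₁ → p.2 ∈ V₂ → p = (u, v)) :
    ¬ ∃ T' : Finset (V × V), IsSpanningOutTree A r T' ∧ v ∈ dleaves r T' := by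
  exact stmt12_general hpart hdisj hr hV₂ fun p hp h₁ h₂ =>
    congrArg Prod.snd (honly p hp h₁ h₂)
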